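/- arXiv:2209.09392 — 6 statements merged into one kernel-verified Lean document; each statement's English description precedes it below -/
import Mathlib

section
/- Let k be a field of characteristic zero and A a commutative k-algebra (not assumed noetherian). Suppose ι : k[t₁, …, t_s] → A is an injective k-algebra homomorphism from the polynomial ring in s ≥ 1 variables. Then the element dι(t₁) ∧ dι(t₂) ∧ … ∧ dι(t_s) is nonzero in the s-th exterior power ⋀^s_A Ω_{A/k}. -/
/-!
Over a domain `R` of characteristic zero, the zero ideal of `R[x₁, …, xₛ] ⊆ A` is a minimal prime,
hence is contracted from a prime `p` of `A`. The `xᵢ` therefore stay algebraically independent in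
the field `K = κ(p)`. In characteristic zero `K` is formally smooth over `R[x₁, …, xₛ]`, so that
`K ⊗ Ω_{R[x]/R}` embeds into `Ω_{K/R}` and the `dxᵢ` are linearly independent over `K`. Their wedge
product in `⋀ˢ Ω_{K/R}` is thus nonzero, and it is the image of the one in `⋀ˢ Ω_{A/R}`.
-/

theorem formallySmooth_field_of_charZero (F K : Type*) [Field F] [CharZero F] [Field K]
    [Algebra F K] : Algebra.FormallySmooth F K := by
  obtain ⟨s, hs⟩ := exists_isTranscendenceBasis F K
  have := hs.isAlgebraic_field
  exact .of_algebraicIndependent_of_isSeparable hs.1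

theorem formallySmooth_of_faithfulSMul_of_charZero (R K : Type*) [CommRing R] [Field K]
    [CharZero K] [Algebra R K] [FaithfulSMul R K] : Algebra.FormallySmooth R K := by
  have : IsDomain R := (FaithfulSMul.algebraMap_injective R K).isDomain
  let _ : Algebra (FractionRing R) K := FractionRing.liftAlgebra R K
  have : CharZero (FractionRing R) := (algebraMap (FractionRing R) K).charZero
  have : Algebra.FormallySmooth R (FractionRing R) := .of_isLocalization (nonZeroDivisors R)
  have := formallySmooth_field_of_charZero (FractionRing R) K
  exact .comp R (FractionRing R) K

theorem mapBaseChange_injective_of_subsingleton_h1Cotangent (R S T : Type*) [CommRing R]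
    [CommRing S] [CommRing T] [Algebra R S] [Algebra R T] [Algebra S T] [IsScalarTower R S T]
    [Subsingleton (Algebra.H1Cotangent S T)] :
    Function.Injective (KaehlerDifferential.mapBaseChange R S T) := by
  refine (injective_iff_map_eq_zero _).2 fun x hx => ?_
  obtain ⟨y, rfl⟩ := (Algebra.H1Cotangent.exact_δ_mapBaseChange R S T x).1 hx
  rw [Subsingleton.elim y 0, map_zero]

theorem linearIndependent_D_of_algebraicIndependent {R K σ : Type*} [CommRing R] [Field K]
    [CharZero K] [Algebra R K] {x : σ → K} (hx : AlgebraicIndependent R x) :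
    LinearIndependent K fun i => KaehlerDifferential.D R K (x i) := by
  let P := MvPolynomial σ R
  let _ : Algebra P K := (MvPolynomial.aeval x).toAlgebra
  have : IsScalarTower R P K := .of_algHom (MvPolynomial.aeval x)
  have : FaithfulSMul P K := (faithfulSMul_iff_algebraMap_injective P K).2 hx
  have := formallySmooth_of_faithfulSMul_of_charZero P K
  have hinj := mapBaseChange_injective_of_subsingleton_h1Cotangent R P K
  have hbasis := ((KaehlerDifferential.mvPolynomialBasis R σ).baseChange K).linearIndependent
  have hX (i : σ) : algebraMap P K (MvPolynomial.X i) = x i := MvPolynomial.aeval_X x i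
  have himage : KaehlerDifferential.mapBaseChange R P K ∘
      (KaehlerDifferential.mvPolynomialBasis R σ).baseChange K =
        fun i => KaehlerDifferential.D R K (x i) := by
    ext i
    simp [P, KaehlerDifferential.mvPolynomialBasis_apply, hX]
  exact himage ▸ hbasis.map' _ (LinearMap.ker_eq_bot.2 hinj)

theorem exists_isPrime_algebraicIndependent_residueField {R A σ : Type*} [CommRing R] [IsDomain R]
    [CommRing A] [Algebra R A] {x : σ → A} (hx : AlgebraicIndependent R x) :
    ∃ (p : Ideal A) (_ : p.IsPrime),
      AlgebraicIndependent R fun i => algebraMap A p.ResidueField (x i) := by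
  obtain ⟨p, hp, hcomap⟩ := Ideal.exists_comap_eq_of_mem_minimalPrimes_of_injective
    (f := (MvPolynomial.aeval (R := R) x).toRingHom) hx ⊥
    (by simp only [IsDomain.minimalPrimes_eq_singleton_bot, Set.mem_singleton_iff])
  refine ⟨p, hp, algebraicIndependent_iff.2 fun f hf => ?_⟩
  have hmem : MvPolynomial.aeval x f ∈ p := by
    rwa [← Ideal.algebraMap_residueField_eq_zero, ← MvPolynomial.aeval_algebraMap_apply]
  have hbot : f ∈ Ideal.comap (MvPolynomial.aeval (R := R) x).toRingHom p := hmem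
  rwa [hcomap, Ideal.mem_bot] at hbot

section ExteriorAlgebra

theorem ιMulti_ne_zero_of_linearIndependent {K V : Type*} [Field K] [AddCommGroup V] [Module K V]
    {n : ℕ} {v : Fin n → V} (hv : LinearIndependent K v) : ExteriorAlgebra.ιMulti K n v ≠ 0 := by
  have h := (exteriorPower.ιMulti_family_linearIndependent_field (n := n) hv).ne_zero
    (Set.powersetCard.ofFinEmbEquiv (RelEmbedding.refl _))
  contrapose! h
  ext
  simpa [ExteriorAlgebra.ιMulti_family] using h

variable {R S M N : Type*} [CommRing R] [CommRing S] [Algebra R S] [AddCommGroup M] [Module R M]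
  [AddCommGroup N] [Module R N] [Module S N] [IsScalarTower R S N]

variable (S) in
/-- The homomorphism of exterior algebras `⋀_R M → ⋀_S N` induced by an `R`-linear map from `M` to
an `S`-module `N`. -/
noncomputable def exteriorAlgebraMap (f : M →ₗ[R] N) :
    ExteriorAlgebra R M →ₐ[R] ExteriorAlgebra S N :=
  ExteriorAlgebra.lift R ⟨(ExteriorAlgebra.ι S).restrictScalars R ∘ₗ f,
    fun m => ExteriorAlgebra.ι_sq_zero (f m)⟩

theorem exteriorAlgebraMap_ιMulti (f : M →ₗ[R] N) {n : ℕ} (v : Fin n → M) :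
    exteriorAlgebraMap S f (ExteriorAlgebra.ιMulti R n v) =
      ExteriorAlgebra.ιMulti S n (f ∘ v) := by
  simp only [ExteriorAlgebra.ιMulti_apply, map_list_prod, List.map_ofFn]
  congr 2
  exact funext fun i => ExteriorAlgebra.lift_ι_apply ..

end ExteriorAlgebra

theorem wedge_of_differentials_of_injection_ne_zero_general {R A : Type*} [CommRing R]
    [IsDomain R] [CharZero R] [CommRing A] [Algebra R A] {n : ℕ} {x : Fin n → A}
    (hx : AlgebraicIndependent R x) :
    ExteriorAlgebra.ιMulti A n (fun i => KaehlerDifferential.D R A (x i)) ≠ 0 := by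
  obtain ⟨p, _, hxp⟩ := exists_isPrime_algebraicIndependent_residueField hx
  let K := p.ResidueField
  have : CharZero K := charZero_of_injective_algebraMap hxp.algebraMap_injective
  have hwedge := ιMulti_ne_zero_of_linearIndependent
    (linearIndependent_D_of_algebraicIndependent hxp)
  intro hzero
  have himage := exteriorAlgebraMap_ιMulti (S := K) (KaehlerDifferential.map R R A K)
    fun i => KaehlerDifferential.D R A (x i)
  simp only [hzero, map_zero, Function.comp_def, KaehlerDifferential.map_D] at himage
  exact hwedge himage.symm

/-- Let `k` be a field of characteristic zero and `A` a commutative `k`-algebra (not assumed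
noetherian). If `ι : k[t₁, …, t_s] → A` is an injective `k`-algebra homomorphism with `s ≥ 1`,
then `dι(t₁) ∧ … ∧ dι(t_s)` is a nonzero element of `⋀^s_A Ω_{A/k}`. -/
theorem wedge_of_differentials_of_injection_ne_zero
    (k A : Type*) [Field k] [CharZero k] [CommRing A] [Algebra k A]
    (s : ℕ) (hs : 1 ≤ s) (ι : MvPolynomial (Fin s) k →ₐ[k] A)
    (hι : Function.Injective ι) :
    ExteriorAlgebra.ιMulti A s
      (fun i => KaehlerDifferential.D k A (ι (MvPolynomial.X i))) ≠ 0 := by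
  exact wedge_of_differentials_of_injection_ne_zero_general
    (x := fun i => ι (MvPolynomial.X i)) (by rwa [MvPolynomial.aeval_unique ι] at hι)
end

section
/- Let k be a field and A a nonzero commutative k-algebra of finite type over k, with Krull dimension d. Then: (a) there exists an injective k-algebra homomorphism from the polynomial ring k[x₁, …, x_d] into A; and (b) for every n, if there exists an injective k-algebra homomorphism from the polynomial ring k[x₁, …, x_n] into A, then n ≤ d. In other words, the k-transcendence cardinality of A is finite and equal to the Krull dimension of A. -/
/-!
By Noether normalization, `A` is integral over a polynomial subring `k[x₁, …, x_s]`. Going up and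
incomparability show that integral extensions preserve Krull dimension, so `s = d`. Integral
extensions do not increase the transcendence degree either, even when `A` has zero divisors: an
algebraically independent family stays independent modulo a suitable prime `P` of `A`, and `A ⧸ P`
is an integral domain which is algebraic over a quotient of `k[x₁, …, x_d]`.
-/

section KrullDimension

variable {R S : Type*} [CommRing R] [CommRing S] [Algebra R S]

theorem ringKrullDim_le_of_hasGoingUp_of_comap_surjective [Algebra.HasGoingUp R S]
    (hsurj : Function.Surjective (PrimeSpectrum.comap (algebraMap R S))) :
    ringKrullDim R ≤ ringKrullDim S := by
  refine iSup_le fun l ↦ ?_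
  obtain ⟨P, hP⟩ := hsurj l.head
  have : P.asIdeal.LiesOver l.head.asIdeal := ⟨(congrArg PrimeSpectrum.asIdeal hP).symm⟩
  obtain ⟨L, hL, -⟩ := Ideal.exists_ltSeries_of_hasGoingUp l P.asIdeal
  exact hL ▸ Order.LTSeries.length_le_krullDim L

variable (R S) [Algebra.IsIntegral R S]

theorem ringKrullDim_le_of_isIntegral : ringKrullDim S ≤ ringKrullDim R :=
  Order.krullDim_le_of_strictMono (PrimeSpectrum.comap (algebraMap R S))
    fun _ _ h ↦ Ideal.IsIntegral.comap_lt_comap h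

theorem ringKrullDim_eq_of_isIntegral [FaithfulSMul R S] : ringKrullDim S = ringKrullDim R :=
  (ringKrullDim_le_of_isIntegral R S).antisymm <|
    ringKrullDim_le_of_hasGoingUp_of_comap_surjective (Algebra.IsIntegral.comap_surjective R S)

end KrullDimension

section TranscendenceDegree

open Algebra Cardinal

universe u v w x

theorem exists_isPrime_algebraicIndependent_mk {ι R A : Type*} [CommRing R] [IsDomain R]
    [CommRing A] [Algebra R A] {x : ι → A} (hx : AlgebraicIndependent R x) :
    ∃ P : Ideal A, P.IsPrime ∧ AlgebraicIndependent R (Ideal.Quotient.mkₐ R P ∘ x) := by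
  -- The zero ideal of the domain `R[xᵢ]` is a minimal prime, so it is contracted from a prime.
  obtain ⟨P, hP, hPx⟩ := Ideal.exists_comap_eq_of_mem_minimalPrimes_of_injective
    (f := (MvPolynomial.aeval (R := R) x).toRingHom) hx ⊥
    (by simp [IsDomain.minimalPrimes_eq_singleton_bot])
  refine ⟨P, hP, algebraicIndependent_iff.mpr fun p hp ↦ ?_⟩
  have hpP : MvPolynomial.aeval x p ∈ P := by
    rw [← Ideal.Quotient.eq_zero_iff_mem, ← hp]
    exact MvPolynomial.comp_aeval_apply x (Ideal.Quotient.mkₐ R P) p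
  have hp_comap : p ∈ P.comap (MvPolynomial.aeval (R := R) x).toRingHom := hpP
  rwa [hPx] at hp_comap

variable (R : Type u) (B : Type v) {A : Type w} [CommRing R] [CommRing B] [CommRing A]
  [Algebra R B] [Algebra R A] [Algebra B A] [IsScalarTower R B A] [Algebra.IsIntegral B A]

theorem lift_trdeg_quotient_le_of_isIntegral (P : Ideal A) [P.IsPrime] :
    lift.{v} (trdeg R (A ⧸ P)) ≤ lift.{w} (trdeg R B) := by
  by_cases hinj : Function.Injective (algebraMap R (A ⧸ P))
  · have : Nontrivial R := (algebraMap R (A ⧸ P)).domain_nontrivial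
    have : FaithfulSMul R (A ⧸ P) := (faithfulSMul_iff_algebraMap_injective ..).mpr hinj
    have : FaithfulSMul R (B ⧸ P.under B) := FaithfulSMul.tower_bot R (B ⧸ P.under B) (A ⧸ P)
    have trdeg_zero : trdeg (B ⧸ P.under B) (A ⧸ P) = 0 := trdeg_eq_zero
    calc lift.{v} (trdeg R (A ⧸ P))
        = lift.{w} (trdeg R (B ⧸ P.under B)) := by
          rw [← lift_trdeg_add_eq R (B ⧸ P.under B) (A ⧸ P), trdeg_zero, lift_zero, add_zero]
      _ ≤ lift.{w} (trdeg R B) :=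
          lift_le.mpr <| trdeg_le_of_surjective _ <| Ideal.Quotient.mkₐ_surjective R (P.under B)
  · simp [trdeg_eq_zero_of_not_injective hinj]

theorem lift_trdeg_le_of_isIntegral [IsDomain R] :
    lift.{v} (trdeg R A) ≤ lift.{w} (trdeg R B) := by
  rw [trdeg, lift_iSup bddAbove_of_small]
  refine ciSup_le' fun s ↦ ?_
  obtain ⟨P, _, hP⟩ := exists_isPrime_algebraicIndependent_mk s.2
  exact (lift_le.mpr hP.cardinalMk_le_trdeg).trans (lift_trdeg_quotient_le_of_isIntegral R B P)

theorem lift_cardinalMk_le_of_injective_of_isIntegral {σ : Type u} {τ : Type v}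
    {R : Type w} {A : Type x} [CommRing R] [IsDomain R] [CommRing A] [Algebra R A]
    {f : MvPolynomial σ R →ₐ[R] A} (hf : Function.Injective f)
    {g : MvPolynomial τ R →ₐ[R] A} (hg : g.IsIntegral) : lift.{v} #σ ≤ lift.{u} #τ := by
  algebraize [g.toRingHom]
  have : Algebra.IsIntegral (MvPolynomial τ R) A := ⟨hg⟩
  have hσA : lift.{max v w x} #σ ≤ lift.{max u v w} (trdeg R A) := by
    simpa only [MvPolynomial.trdeg_of_isDomain, lift_lift] using
      lift_le.{v}.mpr (lift_trdeg_le_of_injective f hf)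
  have hAτ : lift.{max u v w} (trdeg R A) ≤ lift.{max u w x} #τ := by
    simpa only [MvPolynomial.trdeg_of_isDomain, lift_lift] using
      lift_le.{u}.mpr (lift_trdeg_le_of_isIntegral R (MvPolynomial τ R) (A := A))
  refine lift_le.{max w x}.mp ?_
  simpa only [lift_lift] using hσA.trans hAτ

end TranscendenceDegree

theorem exists_injective_isIntegral_algHom_of_ringKrullDim_eq {k A : Type*} [Field k]
    [CommRing A] [Algebra k A] [Algebra.FiniteType k A] {d : ℕ} (hd : ringKrullDim A = d) :
    ∃ g : MvPolynomial (Fin d) k →ₐ[k] A, Function.Injective g ∧ g.IsIntegral := by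
  have : Nontrivial A := by
    by_contra hA
    rw [not_nontrivial_iff_subsingleton] at hA
    exact WithBot.coe_ne_bot (hd.symm.trans ringKrullDim_eq_bot_of_subsingleton)
  obtain ⟨s, g, hg_inj, hg_int⟩ := exists_integral_inj_algHom_of_fg k A
  algebraize [g.toRingHom]
  have : Algebra.IsIntegral (MvPolynomial (Fin s) k) A := ⟨hg_int⟩
  have : FaithfulSMul (MvPolynomial (Fin s) k) A :=
    (faithfulSMul_iff_algebraMap_injective ..).mpr hg_inj
  have hds : (d : WithBot ℕ∞) = s := calc
    (d : WithBot ℕ∞) = ringKrullDim A := hd.symm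
    _ = ringKrullDim (MvPolynomial (Fin s) k) := ringKrullDim_eq_of_isIntegral _ _
    _ = s := by simp [MvPolynomial.ringKrullDim_of_isNoetherianRing]
  obtain rfl : d = s := by exact_mod_cast hds
  exact ⟨g, hg_inj, hg_int⟩

/-- Let `k` be a field and `A` a nonzero finite type commutative `k`-algebra of Krull
dimension `d`. Then (a) there is an injective `k`-algebra homomorphism
`k[x₁, …, x_d] → A`, and (b) any injective `k`-algebra homomorphism `k[x₁, …, x_n] → A`
satisfies `n ≤ d`: the `k`-transcendence cardinality of `A` equals its Krull dimension. -/
theorem transcendence_cardinality_of_finite_type_algebra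
    (k A : Type*) [Field k] [CommRing A] [Nontrivial A] [Algebra k A]
    [Algebra.FiniteType k A] (d : ℕ) (hd : ringKrullDim A = d) :
    (∃ f : MvPolynomial (Fin d) k →ₐ[k] A, Function.Injective f) ∧
      ∀ (n : ℕ) (f : MvPolynomial (Fin n) k →ₐ[k] A), Function.Injective f → n ≤ d := by
  obtain ⟨g, hg_inj, hg_int⟩ :=
    exists_injective_isIntegral_algHom_of_ringKrullDim_eq (k := k) hd
  refine ⟨⟨g, hg_inj⟩, fun n f hf ↦ ?_⟩
  simpa using lift_cardinalMk_le_of_injective_of_isIntegral hf hg_int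
end

section
/- Let k be a field, A a commutative k-algebra, and B a commutative k-algebra containing A as a k-subalgebra such that B is finitely generated as an A-module. Then for every natural number m, there exists an injective k-algebra homomorphism from the polynomial ring k[x₁, …, x_m] into B if and only if there exists an injective k-algebra homomorphism from k[x₁, …, x_m] into A. In particular, A has finite k-transcendence cardinality if and only if B does, and in that case the two transcendence cardinalities coincide. -/
/-!
The polynomial ring is a domain, so if it embeds in `B` then some prime `P` of `B` contracts to
zero in it, and the images of the variables remain algebraically independent in the domain `B ⧸ P`.
This domain is integral over `A ⧸ (P ∩ A)`, hence a transcendence basis of the latter is also one of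
the former. Any two transcendence bases of a domain have the same cardinality, and every
algebraically independent family extends to one, so `A ⧸ (P ∩ A)` carries an algebraically
independent family of the same size. This family lifts along the surjection `A → A ⧸ (P ∩ A)`.
-/

open Function

section

variable {R A B ι : Type*} [CommRing R] [CommRing A] [CommRing B] [Algebra R A] [Algebra R B]

theorem exists_injective_algHom_mvPolynomial_iff_exists_algebraicIndependent :
    (∃ f : MvPolynomial ι R →ₐ[R] A, Injective f) ↔ ∃ x : ι → A, AlgebraicIndependent R x := by
  constructor
  · rintro ⟨f, hf⟩
    exact ⟨f ∘ MvPolynomial.X, (MvPolynomial.algebraicIndependent_X ι R).map' hf⟩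
  · rintro ⟨x, hx⟩
    exact ⟨MvPolynomial.aeval x, hx⟩

theorem exists_isPrime_algebraicIndependent_quotient_mk [IsDomain R] {x : ι → B}
    (hx : AlgebraicIndependent R x) :
    ∃ P : Ideal B, P.IsPrime ∧ AlgebraicIndependent R (Ideal.Quotient.mk P ∘ x) := by
  obtain ⟨P, hP, hcomap⟩ := Ideal.exists_comap_eq_of_mem_minimalPrimes_of_injective
    (f := (MvPolynomial.aeval (R := R) x).toRingHom) hx ⊥
    (by simp [IsDomain.minimalPrimes_eq_singleton_bot])
  refine ⟨P, hP, algebraicIndependent_iff.2 fun p hp ↦ ?_⟩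
  have hmk : Ideal.Quotient.mkₐ R P (MvPolynomial.aeval x p) = 0 :=
    (MvPolynomial.comp_aeval_apply _ _ p).trans hp
  have hmem : MvPolynomial.aeval x p ∈ P := Ideal.Quotient.eq_zero_iff_mem.1 hmk
  rwa [← Ideal.mem_bot, ← hcomap]

theorem exists_algebraicIndependent_comp_eq_of_surjective {φ : A →ₐ[R] B} (hφ : Surjective φ)
    {x : ι → B} (hx : AlgebraicIndependent R x) :
    ∃ y : ι → A, AlgebraicIndependent R y ∧ φ ∘ y = x := by
  obtain ⟨y, rfl⟩ := hφ.comp_left x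
  exact ⟨y, hx.of_comp φ, rfl⟩

variable [Algebra A B] [IsScalarTower R A B]

theorem exists_algebraicIndependent_of_isAlgebraic [Nontrivial R] [NoZeroDivisors B]
    [FaithfulSMul A B] [Algebra.IsAlgebraic A B] {x : ι → B} (hx : AlgebraicIndependent R x) :
    ∃ y : ι → A, AlgebraicIndependent R y := by
  have : NoZeroDivisors A :=
    (FaithfulSMul.algebraMap_injective A B).noZeroDivisors _ (map_zero _) (map_mul _)
  have : FaithfulSMul R B := (faithfulSMul_iff_algebraMap_injective R B).2 hx.algebraMap_injective
  have : FaithfulSMul R A := .tower_bot R A B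
  obtain ⟨s, hs⟩ := exists_isTranscendenceBasis R A
  obtain ⟨t, hxt, ht⟩ := exists_isTranscendenceBasis_superset hx.to_subtype_range
  obtain ⟨e⟩ : Nonempty (t ≃ s) :=
    Cardinal.lift_mk_eq'.1 (ht.lift_cardinalMk_eq (hs.algebraMap_comp (A := B)))
  have hxmem : ∀ i, x i ∈ t := fun i ↦ hxt (Set.mem_range_self i)
  exact ⟨_, hs.1.comp _ (e.injective.comp (hx.injective.codRestrict hxmem))⟩

theorem exists_algebraicIndependent_of_isIntegral [IsDomain R] [Algebra.IsIntegral A B]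
    {x : ι → B} (hx : AlgebraicIndependent R x) : ∃ y : ι → A, AlgebraicIndependent R y := by
  obtain ⟨P, hP, hxP⟩ := exists_isPrime_algebraicIndependent_quotient_mk hx
  obtain ⟨z, hz⟩ := exists_algebraicIndependent_of_isAlgebraic (A := A ⧸ P.under A) hxP
  obtain ⟨y, hy, -⟩ := exists_algebraicIndependent_comp_eq_of_surjective
    (Ideal.Quotient.mkₐ_surjective R (P.under A)) hz
  exact ⟨y, hy⟩

end

theorem transcendence_cardinality_module_finite_extension_general
    (R A B ι : Type*) [CommRing R] [IsDomain R] [CommRing A] [CommRing B] [Algebra R A]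
    [Algebra R B] [Algebra A B] [IsScalarTower R A B] [FaithfulSMul A B] [Algebra.IsIntegral A B] :
    (∃ f : MvPolynomial ι R →ₐ[R] B, Injective f) ↔
      ∃ f : MvPolynomial ι R →ₐ[R] A, Injective f := by
  simp only [exists_injective_algHom_mvPolynomial_iff_exists_algebraicIndependent]
  constructor
  · rintro ⟨x, hx⟩
    exact exists_algebraicIndependent_of_isIntegral hx
  · rintro ⟨y, hy⟩
    exact ⟨_, hy.map' (f := IsScalarTower.toAlgHom R A B) (FaithfulSMul.algebraMap_injective A B)⟩

/-- Let `k` be a field, `B` a commutative `k`-algebra, and `A` a `k`-subalgebra of `B` such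
that `B` is finitely generated as an `A`-module. Then for every `m`, there is an injective
`k`-algebra homomorphism `k[x₁, …, x_m] → B` iff there is one into `A`; hence `A` and `B`
have the same `k`-transcendence cardinality. -/
theorem transcendence_cardinality_module_finite_extension
    (k B : Type*) [Field k] [CommRing B] [Algebra k B]
    (A : Subalgebra k B) [Module.Finite A B] :
    ∀ m : ℕ,
      (∃ f : MvPolynomial (Fin m) k →ₐ[k] B, Function.Injective f) ↔
        (∃ f : MvPolynomial (Fin m) k →ₐ[k] A, Function.Injective f) :=
  fun m ↦ transcendence_cardinality_module_finite_extension_general k A B (Fin m)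
end

section
/- Let k be a field and φ : A → C a homomorphism of commutative k-algebras such that C is finitely generated as an A-module (via φ). Let n be a natural number and suppose that every injective k-algebra homomorphism from a polynomial ring k[x₁, …, x_m] into A satisfies m ≤ n. Then every injective k-algebra homomorphism from a polynomial ring k[x₁, …, x_m] into C also satisfies m ≤ n; i.e., the k-transcendence cardinality of C is at most n. -/
/-! An algebraically independent family in `C` stays independent modulo some prime `P`, because the
zero ideal of a polynomial ring over a domain is a minimal prime and hence is contracted from `C`.
The domain `C ⧸ P` is integral over the image of `A`, so that image contains a transcendence basis
of `C ⧸ P`, which is at least as large as the family and lifts to `A`. -/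

theorem exists_isPrime_injective_quotientMk_comp {B C : Type*} [CommRing B] [IsDomain B]
    [CommRing C] {f : B →+* C} (hf : Function.Injective f) :
    ∃ P : Ideal C, P.IsPrime ∧ Function.Injective ((Ideal.Quotient.mk P).comp f) := by
  obtain ⟨P, hP, hcomap⟩ := Ideal.exists_comap_eq_of_mem_minimalPrimes_of_injective hf ⊥
    (IsDomain.minimalPrimes_eq_singleton_bot B ▸ Set.mem_singleton _)
  refine ⟨P, hP, (RingHom.injective_iff_ker_eq_bot _).mpr ?_⟩
  rw [← RingHom.comap_ker, Ideal.mk_ker, hcomap]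

section AlgebraicIndependence

variable {R A D ι : Type*} [CommRing R] [CommRing A] [Algebra R A] [CommRing D] [IsDomain D]
  [Algebra R D] {x : ι → D}

theorem exists_embedding_algebraicIndependent_of_isAlgebraic_adjoin
    (hx : AlgebraicIndependent R x) (s : Set D) [Algebra.IsAlgebraic (Algebra.adjoin R s) D] :
    ∃ e : ι ↪ s, AlgebraicIndependent R (fun i ↦ (e i : D)) := by
  have : FaithfulSMul R D :=
    (faithfulSMul_iff_algebraMap_injective R D).mpr hx.algebraMap_injective
  have : Nontrivial R := (algebraMap R D).domain_nontrivial
  obtain ⟨t, hts, ht⟩ := exists_isTranscendenceBasis_subset (R := R) s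
  obtain ⟨e⟩ : Nonempty (ι ↪ t) := by
    rw [← Cardinal.lift_mk_le', ht.cardinalMk_eq_trdeg]
    exact hx.lift_cardinalMk_le_trdeg
  exact ⟨e.trans (Set.embeddingOfSubset t s hts), ht.1.comp e e.injective⟩

theorem exists_algebraicIndependent_of_isAlgebraic_range (ψ : A →ₐ[R] D)
    [Algebra.IsAlgebraic ψ.range D] (hx : AlgebraicIndependent R x) :
    ∃ a : ι → A, AlgebraicIndependent R a := by
  have : Algebra.IsAlgebraic (Algebra.adjoin R (ψ.range : Set D)) D := by
    rwa [Algebra.adjoin_eq]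
  obtain ⟨e, he⟩ := exists_embedding_algebraicIndependent_of_isAlgebraic_adjoin hx ψ.range
  choose a ha using fun i ↦ ψ.mem_range.mp (e i).2
  refine ⟨a, .of_comp ψ ?_⟩
  rwa [show ψ ∘ a = fun i ↦ (e i : D) from funext ha]

end AlgebraicIndependence

theorem isAlgebraic_range_of_isIntegral {R A D : Type*} [CommRing R] [CommRing A] [Algebra R A]
    [CommRing D] [Nontrivial D] [Algebra R D] {ψ : A →ₐ[R] D} (hψ : (ψ : A →+* D).IsIntegral) :
    Algebra.IsAlgebraic ψ.range D := by
  have : Algebra.IsIntegral ψ.range D :=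
    ⟨RingHom.IsIntegral.tower_top (ψ.rangeRestrict : A →+* ψ.range) (algebraMap ψ.range D) hψ⟩
  exact this.isAlgebraic

theorem transcendence_cardinality_le_of_finite_map_general {R A C ι : Type*} [CommRing R]
    [IsDomain R] [CommRing A] [Algebra R A] [CommRing C] [Algebra R C] (φ : A →ₐ[R] C)
    (hφ : (φ : A →+* C).IsIntegral) (f : MvPolynomial ι R →ₐ[R] C) (hf : Function.Injective f) :
    ∃ g : MvPolynomial ι R →ₐ[R] A, Function.Injective g := by
  obtain ⟨P, hP, hfP⟩ := exists_isPrime_injective_quotientMk_comp (f := f.toRingHom) hf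
  let π : C →ₐ[R] C ⧸ P := Ideal.Quotient.mkₐ R P
  have hindep : AlgebraicIndependent R (π.comp f ∘ MvPolynomial.X) :=
    (MvPolynomial.algebraicIndependent_X ι R).map' hfP
  have hπφ : (π.comp φ : A →+* C ⧸ P).IsIntegral :=
    hφ.trans _ _ (RingHom.isIntegral_of_surjective _ Ideal.Quotient.mk_surjective)
  have : Algebra.IsAlgebraic (π.comp φ).range (C ⧸ P) :=
    isAlgebraic_range_of_isIntegral hπφ
  obtain ⟨a, ha⟩ := exists_algebraicIndependent_of_isAlgebraic_range (π.comp φ) hindep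
  exact ⟨MvPolynomial.aeval a, ha⟩

/-- Let `k` be a field and `φ : A → C` a homomorphism of commutative `k`-algebras making
`C` a finitely generated `A`-module. If every injective `k`-algebra homomorphism
`k[x₁, …, x_m] → A` satisfies `m ≤ n`, then the same holds for `C`: the
`k`-transcendence cardinality of `C` is at most `n`. -/
theorem transcendence_cardinality_le_of_finite_map
    (k A C : Type*) [Field k] [CommRing A] [Algebra k A] [CommRing C] [Algebra k C]
    (φ : A →ₐ[k] C) (hfin : (φ : A →+* C).Finite) (n : ℕ)
    (hA : ∀ (m : ℕ) (f : MvPolynomial (Fin m) k →ₐ[k] A), Function.Injective f → m ≤ n) :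
    ∀ (m : ℕ) (f : MvPolynomial (Fin m) k →ₐ[k] C), Function.Injective f → m ≤ n := by
  intro m f hf
  obtain ⟨g, hg⟩ := transcendence_cardinality_le_of_finite_map_general φ hfin.to_isIntegral f hf
  exact hA m g hg
end

section
/- Let k be a field of characteristic zero and A a reduced commutative k-algebra (not assumed noetherian). If the first Hochschild homology HH₁(A/k) = Tor₁^{A ⊗_k A}(A, A) vanishes, then HH_i(A/k) = Tor_i^{A ⊗_k A}(A, A) vanishes for all i ≥ 1. -/
open TensorProduct CategoryTheory

/-- `A` is an algebra over `A ⊗[k] A` via the multiplication map `a ⊗ b ↦ a * b`. -/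
noncomputable instance hochschildModuleAlgebra (k A : Type) [CommRing k] [CommRing A]
    [Algebra k A] : Algebra (A ⊗[k] A) A :=
  (Algebra.TensorProduct.lmul' k (S := A)).toRingHom.toAlgebra

/-- Hochschild homology: `HH_i(A/k) = Tor_i^{A ⊗_k A}(A, A)`. -/
noncomputable def HH (k A : Type) [CommRing k] [CommRing A] [Algebra k A] (i : ℕ) :
    ModuleCat (A ⊗[k] A) :=
  ((Tor (ModuleCat (A ⊗[k] A)) i).obj
      (ModuleCat.of (A ⊗[k] A) A)).obj (ModuleCat.of (A ⊗[k] A) A)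

/-!
Let `I` be the kernel of the multiplication map `A ⊗[k] A → A`. Since `Tor₁(A, A) = I / I²` is the
module of Kähler differentials, `HH₁ = 0` says that `A` is formally unramified over `k`. In
characteristic zero this forces `A` to be algebraic over `k`: for a residue field `L` of `A` and
`a ∈ L`, the extension `L / k(a)` is formally smooth, so `Ω[k(a)⁄k]` embeds after base change into
`Ω[L⁄k] = 0`, and `k(a)` is finite separable over `k`. As `A` is reduced, the minimal polynomial
of every `a ∈ A` is separable, and its Taylor expansion shows that the generator
`d = 1 ⊗ a - a ⊗ 1` of `I` is a multiple of `d²`. Hence `I` is pure, `A` is flat over `A ⊗[k] A`,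
and all higher `Tor` vanish.
-/

section Tor

universe u

variable {R : Type u} [CommRing R]

lemma subsingleton_Tor_succ_iff_exact (M N : ModuleCat.{u} R) (P : ProjectiveResolution N)
    (n : ℕ) :
    Subsingleton (((Tor (ModuleCat.{u} R) (n + 1)).obj M).obj N) ↔
      Function.Exact ((P.complex.d (n + 2) (n + 1)).hom.lTensor M)
        ((P.complex.d (n + 1) n).hom.lTensor M) := by
  rw [← ModuleCat.isZero_iff_subsingleton]
  refine (P.isoLeftDerivedObj ((MonoidalCategory.tensoringLeft _).obj M) (n + 1)).isZero_iff.trans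
    ((HomologicalComplex.exactAt_iff_isZero_homology _ _).symm.trans ?_)
  rw [HomologicalComplex.exactAt_iff' _ (n + 2) (n + 1) n (by simp only [ChainComplex.prev]; rfl)
    (by simp), ShortComplex.ShortExact.moduleCat_exact_iff_function_exact]
  rfl

lemma subsingleton_Tor_succ_of_flat (M N : ModuleCat.{u} R) [Module.Flat R M] (n : ℕ) :
    Subsingleton (((Tor (ModuleCat.{u} R) (n + 1)).obj M).obj N) :=
  (subsingleton_Tor_succ_iff_exact M N (projectiveResolution N) n).2 <|
    Module.Flat.lTensor_exact M <|
      (ShortComplex.ShortExact.moduleCat_exact_iff_function_exact _).1 <|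
        (projectiveResolution N).exact_succ n

end Tor

section SurjectiveAlgebraMap

variable {R A B P : Type*} [CommRing R] [CommRing A] [Algebra R A] [CommRing B] [Algebra R B]
  [AddCommGroup P] [Module R P]

lemma one_tmul_eq_zero_iff_of_surjective (hA : Function.Surjective (algebraMap R A)) (m : P) :
    (1 : A) ⊗ₜ[R] m = 0 ↔ m ∈ RingHom.ker (algebraMap R A) • (⊤ : Submodule R P) := by
  let e : (R ⧸ RingHom.ker (algebraMap R A)) ≃ₐ[R] A :=
    Ideal.quotientKerAlgEquivOfSurjective (f := Algebra.ofId R A) hA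
  rw [← LinearMap.ker_tensorProductMk, LinearMap.mem_ker, TensorProduct.mk_apply,
    ← (e.toLinearEquiv.rTensor P).map_eq_zero_iff]
  simp [LinearEquiv.rTensor_tmul]

lemma range_inf_smul_top_le_of_exact_lTensor {P₀ P₁ P₂ : Type*} [AddCommGroup P₀] [Module R P₀]
    [AddCommGroup P₁] [Module R P₁] [AddCommGroup P₂] [Module R P₂]
    (hA : Function.Surjective (algebraMap R A)) {d₂ : P₂ →ₗ[R] P₁} {d₁ : P₁ →ₗ[R] P₀}
    (hd : d₁ ∘ₗ d₂ = 0) (hex : Function.Exact (d₂.lTensor A) (d₁.lTensor A)) :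
    LinearMap.range d₁ ⊓ RingHom.ker (algebraMap R A) • ⊤ ≤
      RingHom.ker (algebraMap R A) • LinearMap.range d₁ := by
  rintro _ ⟨⟨q, rfl⟩, hq⟩
  obtain ⟨t, ht⟩ := (hex (1 ⊗ₜ[R] q)).1 ((one_tmul_eq_zero_iff_of_surjective hA _).2 hq)
  obtain ⟨w, rfl⟩ := TensorProduct.mk_surjective R P₂ A hA t
  have hqw : q - d₂ w ∈ RingHom.ker (algebraMap R A) • (⊤ : Submodule R P₁) := by
    rw [← one_tmul_eq_zero_iff_of_surjective hA, TensorProduct.tmul_sub, ← ht]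
    exact sub_self _
  have hdq : d₁ (q - d₂ w) = d₁ q := by
    rw [map_sub, ← LinearMap.comp_apply, hd, LinearMap.zero_apply, sub_zero]
  rw [← hdq, LinearMap.range_eq_map, ← Submodule.map_smul'']
  exact Submodule.mem_map_of_mem hqw

lemma inf_ker_le_mul_ker_of_projective [Module.Projective R P]
    (hB : Function.Surjective (algebraMap R B)) {π : P →ₗ[R] B} (hπ : Function.Surjective π)
    {I : Ideal R} (hI : LinearMap.ker π ⊓ I • ⊤ ≤ I • LinearMap.ker π) :
    I ⊓ RingHom.ker (algebraMap R B) ≤ I * RingHom.ker (algebraMap R B) := by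
  obtain ⟨φ, hφ⟩ := Module.projective_lifting_property (Algebra.linearMap R B) π hB
  replace hφ : ∀ z, algebraMap R B (φ z) = π z := LinearMap.congr_fun hφ
  obtain ⟨p, hp⟩ := hπ 1
  have map_ker_le : (LinearMap.ker π).map φ ≤ RingHom.ker (algebraMap R B) := by
    rintro _ ⟨z, hz, rfl⟩
    exact (hφ z).trans hz
  intro x ⟨hxI, hxB⟩
  have hxp : x • p ∈ LinearMap.ker π ⊓ I • ⊤ :=
    ⟨by rw [SetLike.mem_coe, LinearMap.mem_ker, map_smul, hp, Algebra.smul_def, hxB, zero_mul],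
      Submodule.smul_mem_smul hxI Submodule.mem_top⟩
  have hφxp : φ (x • p) ∈ I * RingHom.ker (algebraMap R B) := by
    refine Submodule.smul_mono le_rfl map_ker_le ?_
    rw [← Submodule.map_smul'']
    exact Submodule.mem_map_of_mem (hI hxp)
  have hφp : 1 - φ p ∈ RingHom.ker (algebraMap R B) := by
    rw [RingHom.mem_ker, map_sub, hφ, hp, map_one, sub_self]
  have hx : φ (x • p) + x * (1 - φ p) = x := by
    rw [map_smul, smul_eq_mul]
    ring
  exact hx ▸ add_mem hφxp (Ideal.mul_mem_mul hxI hφp)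

end SurjectiveAlgebraMap

lemma ker_inf_ker_eq_mul_of_subsingleton_Tor_one.{u} {R A B : Type u} [CommRing R] [CommRing A]
    [Algebra R A] [CommRing B] [Algebra R B] (hA : Function.Surjective (algebraMap R A))
    (hB : Function.Surjective (algebraMap R B))
    (hTor : Subsingleton
      (((Tor (ModuleCat.{u} R) 1).obj (ModuleCat.of R A)).obj (ModuleCat.of R B))) :
    RingHom.ker (algebraMap R A) ⊓ RingHom.ker (algebraMap R B) =
      RingHom.ker (algebraMap R A) * RingHom.ker (algebraMap R B) := by
  let P := projectiveResolution (ModuleCat.of R B)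
  have hex₁ := (subsingleton_Tor_succ_iff_exact _ _ P 0).1 hTor
  let π : P.complex.X 0 →ₗ[R] B := (P.π.f 0).hom
  have hπ : Function.Surjective π := (ModuleCat.epi_iff_surjective (P.π.f 0)).1 inferInstance
  have hex₀ : Function.Exact (P.complex.d 1 0).hom π :=
    (ShortComplex.ShortExact.moduleCat_exact_iff_function_exact _).1 P.exact₀
  have hd : (P.complex.d 1 0).hom ∘ₗ (P.complex.d 2 1).hom = 0 :=
    congrArg ModuleCat.Hom.hom (P.complex.d_comp_d 2 1 0)
  have : Module.Projective R (P.complex.X 0) :=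
    (IsProjective.iff_projective _).2 (P.projective 0)
  refine le_antisymm (inf_ker_le_mul_ker_of_projective hB hπ ?_) Ideal.mul_le_inf
  rw [LinearMap.exact_iff.1 hex₀]
  exact range_inf_smul_top_le_of_exact_lTensor hA hd hex₁

section FormallyUnramified

lemma formallySmooth_of_charZero (K L : Type*) [Field K] [CharZero K] [Field L] [Algebra K L] :
    Algebra.FormallySmooth K L := by
  obtain ⟨ι, v, hv⟩ := exists_isTranscendenceBasis' K L
  have := hv.isAlgebraic_field
  have := charZero_of_injective_algebraMap
    (algebraMap K (IntermediateField.adjoin K (Set.range v))).injective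
  exact .of_algebraicIndependent_of_isSeparable hv.1

lemma formallyUnramified_of_formallySmooth_faithfullyFlat (R S T : Type*) [CommRing R] [CommRing S]
    [CommRing T] [Algebra R S] [Algebra S T] [Algebra R T] [IsScalarTower R S T]
    [Algebra.FormallyUnramified R T] [Algebra.FormallySmooth S T] [Module.FaithfullyFlat S T] :
    Algebra.FormallyUnramified R S := by
  have hinj : Function.Injective (KaehlerDifferential.mapBaseChange R S T) := by
    refine (injective_iff_map_eq_zero _).2 fun x hx ↦ ?_
    obtain ⟨y, rfl⟩ := (Algebra.H1Cotangent.exact_δ_mapBaseChange R S T x).1 hx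
    rw [Subsingleton.elim y 0, map_zero]
  have : Subsingleton (T ⊗[S] Ω[S⁄R]) := hinj.subsingleton
  exact ⟨(Module.FaithfullyFlat.subsingleton_tensorProduct_iff_right S T).1 this⟩

lemma isAlgebraic_field_of_formallyUnramified (K L : Type*) [Field K] [CharZero K] [Field L]
    [Algebra K L] [Algebra.FormallyUnramified K L] : Algebra.IsAlgebraic K L := by
  refine ⟨fun a ↦ ?_⟩
  let E := IntermediateField.adjoin K {a}
  have : CharZero E := charZero_of_injective_algebraMap (algebraMap K E).injective
  have : Algebra.FormallySmooth E L := formallySmooth_of_charZero E L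
  have : Algebra.FormallyUnramified K E :=
    formallyUnramified_of_formallySmooth_faithfullyFlat K E L
  have : Algebra.EssFiniteType K E :=
    IntermediateField.essFiniteType_iff.2 ⟨{a}, by simp [E]⟩
  have := Algebra.FormallyUnramified.isSeparable K E
  exact IntermediateField.isAlgebraic_iff.1
    (Algebra.IsAlgebraic.isAlgebraic (IntermediateField.AdjoinSimple.gen K a))

open Polynomial in
lemma isAlgebraic_of_formallyUnramified (K A : Type*) [Field K] [CharZero K] [CommRing A]
    [Algebra K A] [Algebra.FormallyUnramified K A] : Algebra.IsAlgebraic K A := by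
  refine ⟨fun a ↦ ?_⟩
  by_contra ha
  have hinj : Function.Injective (aeval (R := K) a) := transcendental_iff_injective.1 ha
  -- The zero ideal of the domain `K[X]` is the contraction of a minimal prime of `A`.
  obtain ⟨P, hP, hPa⟩ := Ideal.exists_comap_eq_of_mem_minimalPrimes_of_injective
    (f := (aeval (R := K) a).toRingHom) hinj ⊥ (by simp [IsDomain.minimalPrimes_eq_singleton_bot])
  have : Algebra.FormallyUnramified (A ⧸ P) P.ResidueField := .of_isLocalization (nonZeroDivisors _)
  have : Algebra.FormallyUnramified A P.ResidueField := .comp A (A ⧸ P) _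
  have : Algebra.FormallyUnramified K P.ResidueField := .comp K A _
  have := isAlgebraic_field_of_formallyUnramified K P.ResidueField
  obtain ⟨f, hf, hfa⟩ := this.isAlgebraic (algebraMap A P.ResidueField a)
  refine hf ?_
  rw [aeval_algebraMap_apply, Ideal.algebraMap_residueField_eq_zero] at hfa
  rwa [← Ideal.mem_bot, ← hPa]

end FormallyUnramified

section Pure

lemma pure_of_forall_exists_eq_mul {R : Type*} [CommRing R] {I : Ideal R}
    (h : ∀ x ∈ I, ∃ y ∈ I, x = x * y) : I.Pure := by
  refine .of_inf_eq_mul I fun J _ ↦ le_antisymm (fun x hx ↦ ?_) Ideal.mul_le_inf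
  obtain ⟨y, hy, hxy⟩ := h x hx.1
  rw [hxy]
  exact Ideal.mul_mem_mul_rev hy hx.2

lemma pure_span {R : Type*} [CommRing R] {s : Set R}
    (h : ∀ x ∈ s, ∃ y ∈ Ideal.span s, x = x * y) : (Ideal.span s).Pure := by
  refine pure_of_forall_exists_eq_mul fun x hx ↦ ?_
  induction hx using Submodule.span_induction with
  | mem x hx => exact h x hx
  | zero => exact ⟨0, zero_mem _, (zero_mul 0).symm⟩
  | add x y _ _ hx hy =>
    obtain ⟨e, he, hxe⟩ := hx
    obtain ⟨f, hf, hyf⟩ := hy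
    refine ⟨e + f - e * f, sub_mem (add_mem he hf) (Ideal.mul_mem_right _ _ he), ?_⟩
    linear_combination (1 - f) * hxe + (1 - e) * hyf
  | smul a x _ hx =>
    obtain ⟨e, he, hxe⟩ := hx
    exact ⟨e, he, by rw [smul_mul_assoc, ← hxe]⟩

open Polynomial in
lemma exists_sub_eq_sub_mul_of_separable {R B : Type*} [CommRing R] [CommRing B] [Algebra R B]
    {g : R[X]} (hg : g.Separable) {x y : B} (hx : aeval x g = 0) (hy : aeval y g = 0) :
    ∃ u, x - y = (x - y) * (u * (x - y)) := by
  obtain ⟨s, t, hst⟩ := hg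
  have hderiv : aeval y t * aeval y (derivative g) = 1 := by
    simpa [hy] using congrArg (aeval y) hst
  -- Taylor expansion: `0 = g x = g y + g' y * (x - y) + c * (x - y) ^ 2`, with `g' y` a unit.
  obtain ⟨c, hc⟩ := (g.map (algebraMap R B)).binomExpansion y (x - y)
  rw [add_sub_cancel, derivative_map, eval_map_algebraMap, eval_map_algebraMap,
    eval_map_algebraMap, hx, hy] at hc
  exact ⟨-(aeval y t * c), by linear_combination (-aeval y t) * hc - (x - y) * hderiv⟩

open Polynomial in
lemma pure_kaehlerDifferential_ideal_of_separable {R A : Type*} [CommRing R] [CommRing A]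
    [Algebra R A] (h : ∀ a : A, ∃ g : R[X], g.Separable ∧ aeval a g = 0) :
    (KaehlerDifferential.ideal R A).Pure := by
  rw [← KaehlerDifferential.span_range_eq_ideal]
  refine pure_span ?_
  rintro _ ⟨a, rfl⟩
  obtain ⟨g, hg, hga⟩ := h a
  have aeval_eq_zero (i : A →ₐ[R] A ⊗[R] A) : aeval (i a) g = 0 := by
    rw [aeval_algHom_apply, hga, map_zero]
  obtain ⟨u, hu⟩ := exists_sub_eq_sub_mul_of_separable hg
    (aeval_eq_zero Algebra.TensorProduct.includeRight)
    (aeval_eq_zero Algebra.TensorProduct.includeLeft)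
  exact ⟨_, Ideal.mul_mem_left _ u (Ideal.subset_span ⟨a, rfl⟩), hu⟩

lemma flat_of_pure_ker {R A : Type*} [CommRing R] [CommRing A] [Algebra R A]
    (hA : Function.Surjective (algebraMap R A)) (hker : (RingHom.ker (algebraMap R A)).Pure) :
    Module.Flat R A :=
  have : (RingHom.ker (Algebra.ofId R A)).Pure := hker
  .of_linearEquiv
    (Ideal.quotientKerAlgEquivOfSurjective (f := Algebra.ofId R A) hA).symm.toLinearEquiv

lemma weaklyEtale_of_isAlgebraic_of_isReduced (K A : Type*) [Field K] [PerfectField K] [CommRing A]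
    [Algebra K A] [Algebra.IsAlgebraic K A] [IsReduced A] : Algebra.WeaklyEtale K A where
  flat_lmul' := by
    algebraize [(Algebra.TensorProduct.lmul' K (S := A)).toRingHom]
    have : (RingHom.ker (algebraMap (A ⊗[K] A) A)).Pure :=
      pure_kaehlerDifferential_ideal_of_separable fun a ↦
        ⟨minpoly K a, PerfectField.separable_iff_squarefree.2 <|
          (minpoly.isRadical K a).squarefree <|
            minpoly.ne_zero (Algebra.IsAlgebraic.isAlgebraic a).isIntegral, minpoly.aeval K a⟩
    exact flat_of_pure_ker (fun a ↦ ⟨a ⊗ₜ 1, by simp [RingHom.algebraMap_toAlgebra]⟩) this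

end Pure

section HH

variable (k A : Type) [CommRing k] [CommRing A] [Algebra k A]

lemma formallyUnramified_of_subsingleton_HH_one (h : Subsingleton (HH k A 1)) :
    Algebra.FormallyUnramified k A := by
  have hsurj : Function.Surjective (algebraMap (A ⊗[k] A) A) := fun a ↦
    ⟨a ⊗ₜ 1, (Algebra.TensorProduct.lmul'_apply_tmul a 1).trans (mul_one a)⟩
  have hideal : IsIdempotentElem (KaehlerDifferential.ideal k A) :=
    (ker_inf_ker_eq_mul_of_subsingleton_Tor_one hsurj hsurj h).symm.trans (inf_idem _)
  exact ⟨(Ideal.cotangent_subsingleton_iff _).2 hideal⟩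

lemma subsingleton_HH_succ_of_weaklyEtale [Algebra.WeaklyEtale k A] (n : ℕ) :
    Subsingleton (HH k A (n + 1)) :=
  have : Module.Flat (A ⊗[k] A) A := Algebra.WeaklyEtale.flat_lmul' k A
  subsingleton_Tor_succ_of_flat _ _ n

end HH

/-- Let `k` be a field of characteristic zero and `A` a reduced commutative `k`-algebra.
If the first Hochschild homology `HH₁(A/k) = Tor₁^{A ⊗_k A}(A, A)` vanishes, then
`HH_i(A/k)` vanishes for all `i ≥ 1`. -/
theorem hochschild_homology_rigidity
    (k A : Type) [Field k] [CharZero k] [CommRing A] [Algebra k A] [IsReduced A]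
    (h1 : Subsingleton (HH k A 1)) :
    ∀ i : ℕ, 1 ≤ i → Subsingleton (HH k A i) := by
  have : Algebra.FormallyUnramified k A := formallyUnramified_of_subsingleton_HH_one k A h1
  have : Algebra.IsAlgebraic k A := isAlgebraic_of_formallyUnramified k A
  have : Algebra.WeaklyEtale k A := weaklyEtale_of_isAlgebraic_of_isReduced k A
  intro i hi
  obtain ⟨n, rfl⟩ := Nat.exists_eq_add_of_le' hi
  exact subsingleton_HH_succ_of_weaklyEtale k A n
end

section
/- Let k be a field of characteristic zero and L a field extension of k. Let {x_i : i ∈ I} ⊆ L be a transcendence basis of L over k. Then the module of Kähler differentials Ω_{L/k} is a free L-module with basis {dx_i : i ∈ I}; that is, the family (dx_i)_{i ∈ I} is an L-basis of Ω_{L/k}. -/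
/-!
If `A → B` is formally étale, then `B ⊗[A] Ω[A⁄R] ≃ Ω[B⁄R]`, so a basis of `Ω[A⁄R]` induces one of
`Ω[B⁄R]`. Algebraic independence of `x` makes `X i ↦ x i` an isomorphism from the polynomial ring
onto `R[x]`; passing to the fraction field is a localization, and a separable algebraic extension
of fields, even an infinite one, is formally étale. Hence the map `X i ↦ x i` from the polynomial
ring to `L` is formally étale, and it carries the basis `dX i` to `dx i`. In characteristic zero
every algebraic extension is separable.
-/

section FormallyEtale

theorem formallyEtale_algebraMap_of_isLocalization_of_isSeparable {A : Type*} [CommRing A]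
    (M : Submonoid A) (K L : Type*) [Field K] [Field L] [Algebra A K] [IsLocalization M K]
    [Algebra K L] [Algebra A L] [IsScalarTower A K L] [Algebra.IsSeparable K L] :
    (algebraMap A L).FormallyEtale := by
  have : Algebra.FormallyEtale A K := .of_isLocalization M
  have : Algebra.FormallyEtale K L := .of_isSeparable K L
  exact RingHom.formallyEtale_algebraMap.mpr (.comp A K L)

open MvPolynomial KaehlerDifferential

variable {ι R A : Type*} [CommRing R] [CommRing A] [Algebra R A] {x : ι → A}

theorem formallyEtale_aeval_of_algebraicIndependent (hx : AlgebraicIndependent R x)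
    (h : (algebraMap (Algebra.adjoin R (Set.range x)) A).FormallyEtale) :
    (aeval x : MvPolynomial ι R →ₐ[R] A).toRingHom.FormallyEtale := by
  have aeval_eq_comp : (aeval x : MvPolynomial ι R →ₐ[R] A).toRingHom =
      (algebraMap (Algebra.adjoin R (Set.range x)) A).comp hx.aevalEquiv.toRingHom :=
    RingHom.ext fun p ↦ (hx.algebraMap_aevalEquiv p).symm
  have aevalEquiv_formallyEtale : hx.aevalEquiv.toRingHom.FormallyEtale :=
    (RingHom.Etale.of_bijective hx.aevalEquiv.bijective).formallyEtale
  exact aeval_eq_comp ▸ aevalEquiv_formallyEtale.comp h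

/-- The basis of `Ω[B⁄R]` induced by a basis of `Ω[A⁄R]` when `B` is formally étale over `A`. -/
noncomputable def kaehlerBasisOfFormallyEtale (B : Type*) [CommRing B] [Algebra R B] [Algebra A B]
    [IsScalarTower R A B] [Algebra.FormallyEtale A B] (b : Module.Basis ι A Ω[A⁄R]) :
    Module.Basis ι B Ω[B⁄R] :=
  (b.baseChange B).map (tensorKaehlerEquivOfFormallyEtale R A B)

theorem kaehlerBasisOfFormallyEtale_apply (B : Type*) [CommRing B] [Algebra R B] [Algebra A B]
    [IsScalarTower R A B] [Algebra.FormallyEtale A B] (b : Module.Basis ι A Ω[A⁄R]) (i : ι) :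
    kaehlerBasisOfFormallyEtale B b i = map R R A B (b i) := by
  simp [kaehlerBasisOfFormallyEtale]

theorem exists_kaehlerBasis_of_formallyEtale_aeval
    (hx : (aeval x : MvPolynomial ι R →ₐ[R] A).toRingHom.FormallyEtale) :
    ∃ b : Module.Basis ι A Ω[A⁄R], ∀ i, b i = D R A (x i) := by
  let : Algebra (MvPolynomial ι R) A := (aeval x).toRingHom.toAlgebra
  have : IsScalarTower R (MvPolynomial ι R) A := .of_algebraMap_eq fun r ↦ (aeval_C x r).symm
  have : Algebra.FormallyEtale (MvPolynomial ι R) A := hx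
  have algebraMap_X (i : ι) : algebraMap (MvPolynomial ι R) A (X i) = x i := aeval_X x i
  refine ⟨kaehlerBasisOfFormallyEtale A (mvPolynomialBasis R ι), fun i ↦ ?_⟩
  rw [kaehlerBasisOfFormallyEtale_apply, mvPolynomialBasis_apply, map_D, algebraMap_X]

end FormallyEtale

theorem kaehler_differentials_basis_of_transcendence_basis_general
    {R L I : Type*} [CommRing R] [Field L] [Algebra R L] {x : I → L}
    (hx : AlgebraicIndependent R x) (K : Type*) [Field K]
    [Algebra (Algebra.adjoin R (Set.range x)) K] [IsFractionRing (Algebra.adjoin R (Set.range x)) K]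
    [Algebra K L] [IsScalarTower (Algebra.adjoin R (Set.range x)) K L] [Algebra.IsSeparable K L] :
    LinearIndependent L (fun i => KaehlerDifferential.D R L (x i)) ∧
      Submodule.span L (Set.range fun i => KaehlerDifferential.D R L (x i)) = ⊤ := by
  have formallyEtale_adjoin := formallyEtale_algebraMap_of_isLocalization_of_isSeparable
    (nonZeroDivisors (Algebra.adjoin R (Set.range x))) K L
  obtain ⟨b, hb⟩ := exists_kaehlerBasis_of_formallyEtale_aeval
    (formallyEtale_aeval_of_algebraicIndependent hx formallyEtale_adjoin)
  rw [← funext hb]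
  exact ⟨b.linearIndependent, b.span_eq⟩

/-- Let `k` be a field of characteristic zero, `L` a field extension of `k`, and
`{x_i : i ∈ I}` a transcendence basis of `L` over `k`. Then `Ω_{L/k}` is a free
`L`-module with basis `{dx_i : i ∈ I}`. -/
theorem kaehler_differentials_basis_of_transcendence_basis
    (k L : Type*) [Field k] [CharZero k] [Field L] [Algebra k L]
    (I : Type*) (x : I → L) (hx : IsTranscendenceBasis k x) :
    LinearIndependent L (fun i => KaehlerDifferential.D k L (x i)) ∧
      Submodule.span L (Set.range fun i => KaehlerDifferential.D k L (x i)) = ⊤ := by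
  have := hx.isAlgebraic_field
  open scoped IntermediateField.algebraAdjoinAdjoin in
  exact kaehler_differentials_basis_of_transcendence_basis_general hx.1
    (IntermediateField.adjoin k (Set.range x))
end
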